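/- Let (Φ₁,Φ₂) be a branching mechanism, V the unique solution of the cumulant equations (3.8), and (P_t)_{t≥0} the associated transition probabilities determined by ∫_𝕄 e^{−⟨λ,y⟩} P_t(x,dy) = exp(−⟨x,V(t,λ)⟩). Then for all λ ∈ [0,∞)², x ∈ 𝕄 and t ≥ 0: ∫_𝕄 (λ₁y₁ + λ₂y₂) P_t(x,dy) = x₁π₁(t,λ) + x₂π₂(t,λ), where t ↦ π(t,λ) = (π₁(t,λ),π₂(t,λ)) ∈ [0,∞)² is the unique solution of the linear system dπ₁/dt = −a₁₁π₁(t,λ) + π₂(t,λ)·∫_𝕄 z₂ n₁(dz), dπ₂/dt = a₂₁π₁(t,λ) + ∫_{𝕄₋₁}(z₁π₁(t,λ) + z₂π₂(t,λ)) n₂(dz), with initial condition π(0,λ) = λ. -/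

import Mathlib

open MeasureTheory Filter Set

noncomputable section

/-- The state space `𝕄 = [0,∞) × ℕ`, as a subset of `ℝ²`. -/
def Mset : Set (ℝ × ℝ) := {z | 0 ≤ z.1 ∧ ∃ n : ℕ, z.2 = (n : ℝ)}

/-- The space `𝕄₋₁ = [0,∞) × (ℕ ∪ {-1})`, as a subset of `ℝ²`. -/
def Mm1set : Set (ℝ × ℝ) := {z | 0 ≤ z.1 ∧ ∃ n : ℤ, (-1 : ℤ) ≤ n ∧ z.2 = (n : ℝ)}

/-- The data of a branching mechanism `(Φ₁, Φ₂)` of a mixed state branching process. -/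
structure BranchingMechanism where
  a11 : ℝ
  a21 : ℝ
  alpha : ℝ
  a21_nonneg : 0 ≤ a21
  alpha_nonneg : 0 ≤ alpha
  n1 : Measure (ℝ × ℝ)
  n2 : Measure (ℝ × ℝ)
  n1_sigmaFinite : SigmaFinite n1
  n2_sigmaFinite : SigmaFinite n2
  /-- `n₁` is supported on `𝕄` -/
  n1_supp : n1 Msetᶜ = 0
  /-- `n₂` is supported on `𝕄₋₁` -/
  n2_supp : n2 Mm1setᶜ = 0
  /-- `n₁` does not charge the origin -/
  n1_zero : n1 {0} = 0
  /-- `n₂` does not charge the origin -/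
  n2_zero : n2 {0} = 0
  /-- `n₂([0,∞) × {-1}) < ∞` -/
  n2_neg1 : n2 {z : ℝ × ℝ | z.2 = -1} ≠ ⊤
  /-- `∫ (z₁ ∧ z₁² + z₂) n₁(dz) < ∞` -/
  n1_moment : ∫⁻ z, ENNReal.ofReal (min z.1 (z.1 ^ 2) + z.2) ∂n1 ≠ ⊤
  /-- `∫ (z₁ + |z₂|) n₂(dz) < ∞` -/
  n2_moment : ∫⁻ z, ENNReal.ofReal (z.1 + |z.2|) ∂n2 ≠ ⊤

/-- `Φ₁(λ) = -a₁₁λ₁ - αλ₁² - ∫ (e^{-⟨λ,z⟩} - 1 + λ₁z₁) n₁(dz)`. -/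
def mPhi1 (B : BranchingMechanism) (l : ℝ × ℝ) : ℝ :=
  -B.a11 * l.1 - B.alpha * l.1 ^ 2 -
    ∫ z, (Real.exp (-(l.1 * z.1 + l.2 * z.2)) - 1 + l.1 * z.1) ∂B.n1

/-- `Φ₂(λ) = a₂₁λ₁ + ∫ (1 - e^{-⟨λ,z⟩}) n₂(dz)`. -/
def mPhi2 (B : BranchingMechanism) (l : ℝ × ℝ) : ℝ :=
  B.a21 * l.1 + ∫ z, (1 - Real.exp (-(l.1 * z.1 + l.2 * z.2))) ∂B.n2


/-- `V : t ↦ V(t,λ)` is a continuous `[0,∞)²`-valued solution of the cumulant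
equations (3.8) with initial value `λ = l`. -/
def SolvesCumulant (B : BranchingMechanism) (l : ℝ × ℝ) (V : ℝ → ℝ × ℝ) : Prop :=
  ContinuousOn V (Ici 0) ∧
  (∀ t : ℝ, 0 ≤ t → 0 ≤ (V t).1 ∧ 0 ≤ (V t).2) ∧
  (∀ t : ℝ, 0 ≤ t →
    (V t).1 = l.1 + ∫ s in (0:ℝ)..t, mPhi1 B (V s) ∧
    (V t).2 = l.2 + ∫ s in (0:ℝ)..t, mPhi2 B (V s))

/-- `P` is the family of transition probabilities of the MSB-process with cumulant
`V`: each `P_t(x,·)` is a Borel probability measure on `𝕄` with Laplace transform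
`∫ e^{-⟨λ,y⟩} P_t(x,dy) = exp(-⟨x,V(t,λ)⟩)`. -/
def IsMSBTransition (V : ℝ → (ℝ × ℝ) → ℝ × ℝ)
    (P : ℝ → (ℝ × ℝ) → Measure (ℝ × ℝ)) : Prop :=
  ∀ t : ℝ, 0 ≤ t → ∀ x ∈ Mset,
    IsProbabilityMeasure (P t x) ∧ P t x Msetᶜ = 0 ∧
    ∀ l : ℝ × ℝ, 0 ≤ l.1 → 0 ≤ l.2 →
      ∫ y, Real.exp (-(l.1 * y.1 + l.2 * y.2)) ∂(P t x)
        = Real.exp (-(x.1 * (V t l).1 + x.2 * (V t l).2))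

/-- `π : t ↦ π(t,λ)` is a `[0,∞)²`-valued solution of the moment linear system
`dπ₁/dt = -a₁₁π₁ + π₂ ∫ z₂ n₁(dz)`,
`dπ₂/dt = a₂₁π₁ + ∫ (z₁π₁ + z₂π₂) n₂(dz)`, with `π(0,λ) = l`. -/
def SolvesMoment (B : BranchingMechanism) (l : ℝ × ℝ) (π : ℝ → ℝ × ℝ) : Prop :=
  π 0 = l ∧
  (∀ t : ℝ, 0 ≤ t → 0 ≤ (π t).1 ∧ 0 ≤ (π t).2) ∧
  (∀ t : ℝ, 0 ≤ t →
    HasDerivWithinAt (fun s => (π s).1)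
      (-B.a11 * (π t).1 + (π t).2 * ∫ z, z.2 ∂B.n1) (Ici 0) t ∧
    HasDerivWithinAt (fun s => (π s).2)
      (B.a21 * (π t).1 + ∫ z, (z.1 * (π t).1 + z.2 * (π t).2) ∂B.n2) (Ici 0) t)

/-!
Near the origin a branching mechanism is `Φ(λ) = Aλ + o(‖λ‖)` on the quadrant `[0,∞)²`, where `A` is
the matrix of the moment system and the remainder is small because the jump measures integrate
`s ∧ s²`, `s` being the size of the jump. The cumulant flow `λ ↦ V(t,λ)` fixes the equilibrium `0`,
and a Gronwall-type barrier shows that it is differentiable there with derivative `e^{tA}`.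
Differentiating the Laplace transform `θ ↦ exp(-⟨x,V(t,θλ)⟩)` at `θ = 0` therefore gives the first
moment `⟨x, e^{tA}λ⟩`. That `e^{tA}λ` lies in the quadrant is read off from this formula at the
states `x = (1,0)` and `x = (0,1)`, whose first moments are nonnegative.
-/

open scoped Topology

section LinearFlow

variable {E : Type*} [NormedAddCommGroup E] [NormedSpace ℝ E] [CompleteSpace E]

theorem hasDerivAt_exp_smul_apply (A : E →L[ℝ] E) (x : E) (t : ℝ) :
    HasDerivAt (fun s : ℝ => NormedSpace.exp (s • A) x) (A (NormedSpace.exp (t • A) x)) t := by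
  simpa using (hasDerivAt_exp_smul_const' (𝕂 := ℝ) A t).clm_apply (hasDerivAt_const t x)

theorem continuous_exp_smul_apply (A : E →L[ℝ] E) (x : E) :
    Continuous fun s : ℝ => NormedSpace.exp (s • A) x :=
  continuous_iff_continuousAt.2 fun s => (hasDerivAt_exp_smul_apply A x s).continuousAt

theorem norm_exp_smul_apply_le (A : E →L[ℝ] E) (x : E) {t : ℝ} (ht : 0 ≤ t) :
    ‖NormedSpace.exp (t • A) x‖ ≤ ‖x‖ * Real.exp (‖A‖ * t) := by
  have h := norm_le_gronwallBound_of_norm_deriv_right_le (δ := ‖x‖) (K := ‖A‖) (ε := 0)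
    (continuous_exp_smul_apply A x).continuousOn
    (fun s _ => (hasDerivAt_exp_smul_apply A x s).hasDerivWithinAt) (by simp)
    (fun s _ => by simpa using A.le_opNorm _) t (right_mem_Icc.2 ht)
  simpa [gronwallBound_ε0] using h

theorem eq_exp_smul_apply_of_hasDerivWithinAt (A : E →L[ℝ] E) {f : ℝ → E}
    (hf : ∀ t, 0 ≤ t → HasDerivWithinAt f (A (f t)) (Ici 0) t) {t : ℝ} (ht : 0 ≤ t) :
    f t = NormedSpace.exp (t • A) (f 0) :=
  ODE_solution_unique (v := fun _ => A) (fun _ => A.lipschitz)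
    (fun s hs => ((hf s hs.1).continuousWithinAt).mono Icc_subset_Ici_self)
    (fun s hs => (hf s hs.1).mono (Ici_subset_Ici.2 hs.1))
    (continuous_exp_smul_apply A (f 0)).continuousOn
    (fun s _ => (hasDerivAt_exp_smul_apply A (f 0) s).hasDerivWithinAt)
    (by simp) (right_mem_Icc.2 ht)

end LinearFlow

section Linearization

variable {E : Type*} [NormedAddCommGroup E] [NormedSpace ℝ E] [CompleteSpace E]
  {F : E → E} {A : E →L[ℝ] E} {S : Set E}

theorem norm_sub_exp_smul_apply_le_of_hasDerivWithinAt {y : ℝ → E} {ε δ η T : ℝ}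
    (hF : ∀ v ∈ S, ‖v‖ ≤ δ → ‖F v - A v‖ ≤ ε * ‖v‖)
    (hyc : ContinuousOn y (Icc 0 T)) (hyS : ∀ t ∈ Ico 0 T, y t ∈ S)
    (hy : ∀ t ∈ Ico 0 T, HasDerivWithinAt y (F (y t)) (Ici t) t)
    (hy0 : ‖y 0‖ ≤ η) (hη : 0 < η) (hε : 0 < ε) (hε1 : ε ≤ 1)
    (hηδ : 2 * η * Real.exp ((‖A‖ + 3) * T) ≤ δ) {t : ℝ} (ht : t ∈ Icc 0 T) :
    ‖y t - NormedSpace.exp (t • A) (y 0)‖ ≤ ε * η * Real.exp ((‖A‖ + 3) * t) := by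
  set K := ‖A‖ + 3 with hK
  have hB (s : ℝ) : HasDerivAt (fun s => ε * η * Real.exp (K * s))
      (K * (ε * η * Real.exp (K * s))) s := by
    convert! (((hasDerivAt_id s).const_mul K).exp.const_mul (ε * η)) using 1
    simp only [id_eq]
    ring
  refine image_norm_le_of_norm_deriv_right_lt_deriv_boundary
    (hyc.sub (continuous_exp_smul_apply A (y 0)).continuousOn)
    (fun s hs => (hy s hs).sub (hasDerivAt_exp_smul_apply A (y 0) s).hasDerivWithinAt)
    (by simpa using by positivity) hB (fun s hs hbdry => ?_) ht
  change ‖y s - NormedSpace.exp (s • A) (y 0)‖ = _ at hbdry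
  -- On first touching the barrier the error grows at rate at most `‖A‖ + 2` times the barrier,
  -- slower than the barrier itself, whose rate is `‖A‖ + 3`.
  set d := y s - NormedSpace.exp (s • A) (y 0) with hd
  have hy_le : ‖y s‖ ≤ 2 * η * Real.exp (K * s) := by
    have hlin : ‖NormedSpace.exp (s • A) (y 0)‖ ≤ η * Real.exp (K * s) :=
      (norm_exp_smul_apply_le A _ hs.1).trans (by gcongr; exacts [hs.1, by simp [hK]])
    calc ‖y s‖ = ‖d + NormedSpace.exp (s • A) (y 0)‖ := by rw [hd, sub_add_cancel]
      _ ≤ ε * η * Real.exp (K * s) + η * Real.exp (K * s) :=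
        (norm_add_le _ _).trans (add_le_add hbdry.le hlin)
      _ ≤ 1 * η * Real.exp (K * s) + η * Real.exp (K * s) := by gcongr
      _ = 2 * η * Real.exp (K * s) := by ring
  have hrem : ‖F (y s) - A (y s)‖ ≤ ε * (2 * η * Real.exp (K * s)) := by
    refine (hF _ (hyS s hs) (hy_le.trans (le_trans ?_ hηδ))).trans (by gcongr)
    gcongr
    exact hs.2.le
  have hpos : 0 < ε * η * Real.exp (K * s) := by positivity
  calc ‖F (y s) - A (NormedSpace.exp (s • A) (y 0))‖
      = ‖A d + (F (y s) - A (y s))‖ := by rw [hd, map_sub]; abel_nf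
    _ ≤ ‖A‖ * ‖d‖ + ε * (2 * η * Real.exp (K * s)) :=
      (norm_add_le _ _).trans (add_le_add (A.le_opNorm d) hrem)
    _ < K * (ε * η * Real.exp (K * s)) := by rw [hbdry, hK]; linarith

/-- `V : t ↦ V(t, l)` is, for each `l ∈ S`, an `S`-valued trajectory on `[0, ∞)` of the vector field
`F` started at `l`. Derivatives are right derivatives, as produced by an integral equation. -/
structure IsForwardSolutionOn (F : E → E) (S : Set E) (V : ℝ → E → E) : Prop where
  initial : ∀ l ∈ S, V 0 l = l
  mem : ∀ l ∈ S, ∀ t, 0 ≤ t → V t l ∈ S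
  continuousOn : ∀ l ∈ S, ContinuousOn (fun t => V t l) (Ici 0)
  hasDerivWithinAt : ∀ l ∈ S, ∀ t, 0 ≤ t →
    HasDerivWithinAt (fun s => V s l) (F (V t l)) (Ici t) t

namespace IsForwardSolutionOn

variable {V : ℝ → E → E}

theorem eventually_norm_sub_exp_smul_apply_le (hV : IsForwardSolutionOn F S V)
    (hF : HasFDerivWithinAt F A S 0) (hF0 : F 0 = 0) {t : ℝ} (ht : 0 ≤ t) {c : ℝ} (hc : 0 < c) :
    ∀ᶠ l in 𝓝[S] 0, ‖V t l - NormedSpace.exp (t • A) l‖ ≤ c * ‖l‖ := by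
  set G := Real.exp ((‖A‖ + 3) * t)
  set ε := min 1 (c / G)
  have hG0 : 0 < G := Real.exp_pos _
  have hε0 : 0 < ε := by positivity
  obtain ⟨δ, hδ, hFδ⟩ : ∃ δ > 0, ∀ v ∈ S, ‖v‖ ≤ δ → ‖F v - A v‖ ≤ ε * ‖v‖ := by
    have h := Asymptotics.isLittleO_iff.1 hF.isLittleO hε0
    obtain ⟨δ, hδ, hball⟩ :=
      (nhdsWithin_hasBasis Metric.nhds_basis_closedBall S).eventually_iff.1 h
    exact ⟨δ, hδ, fun v hvS hv => by simpa [hF0] using hball ⟨by simpa using hv, hvS⟩⟩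
  have hsmall : ∀ᶠ l in 𝓝[S] (0 : E), ‖l‖ < δ / (2 * G) :=
    nhdsWithin_le_nhds <| (by simpa using continuous_norm.tendsto (0 : E) :
      Tendsto norm (𝓝 (0 : E)) (𝓝 0)).eventually_lt_const (by positivity)
  filter_upwards [hsmall, self_mem_nhdsWithin] with l hl hlS
  have hη : ∀ η ∈ Ioo ‖l‖ (δ / (2 * G)), ‖V t l - NormedSpace.exp (t • A) l‖ ≤ c * η := by
    rintro η ⟨hlη, hηδ⟩
    have hη0 : 0 < η := (norm_nonneg l).trans_lt hlη
    rw [lt_div_iff₀ (by positivity)] at hηδ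
    have h := norm_sub_exp_smul_apply_le_of_hasDerivWithinAt (y := fun s => V s l) hFδ
      ((hV.continuousOn l hlS).mono Icc_subset_Ici_self) (fun s hs => hV.mem l hlS s hs.1)
      (fun s hs => hV.hasDerivWithinAt l hlS s hs.1) (by simpa [hV.initial l hlS] using hlη.le)
      hη0 hε0 (min_le_left _ _) (by linarith) (right_mem_Icc.2 ht)
    calc ‖V t l - NormedSpace.exp (t • A) l‖ ≤ ε * η * G := by simpa [hV.initial l hlS] using h
      _ ≤ c / G * η * G := by gcongr; exact min_le_right _ _
      _ = c * η := by field_simp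
  -- The barrier needs a positive size `η`; letting `η` decrease to `‖l‖` also covers `l = 0`.
  refine ge_of_tendsto ((continuous_const_mul c).continuousWithinAt (s := Ioi ‖l‖)) ?_
  filter_upwards [Ioo_mem_nhdsGT hl] with η using hη η

theorem hasFDerivWithinAt_zero (hV : IsForwardSolutionOn F S V) (h0 : (0 : E) ∈ S)
    (hF : HasFDerivWithinAt F A S 0) (hF0 : F 0 = 0) {t : ℝ} (ht : 0 ≤ t) :
    HasFDerivWithinAt (V t) (NormedSpace.exp (t • A)) S 0 := by
  have hV0 : V t 0 = 0 := by
    simpa using (hV.eventually_norm_sub_exp_smul_apply_le hF hF0 ht one_pos).self_of_nhdsWithin h0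
  refine .of_isLittleO (Asymptotics.isLittleO_iff.2 fun c hc => ?_)
  simpa [hV0] using hV.eventually_norm_sub_exp_smul_apply_le hF hF0 ht hc

end IsForwardSolutionOn

end Linearization

theorem hasDerivWithinAt_prod_iff {𝕜 E F : Type*} [NontriviallyNormedField 𝕜]
    [NormedAddCommGroup E] [NormedSpace 𝕜 E] [NormedAddCommGroup F] [NormedSpace 𝕜 F]
    {f : 𝕜 → E × F} {f' : E × F} {s : Set 𝕜} {x : 𝕜} :
    HasDerivWithinAt f f' s x ↔ HasDerivWithinAt (fun y => (f y).1) f'.1 s x ∧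
      HasDerivWithinAt (fun y => (f y).2) f'.2 s x := by
  refine ⟨fun h => ⟨?_, ?_⟩, fun h => h.1.prodMk h.2⟩
  · simpa using h.hasFDerivWithinAt.fst.hasDerivWithinAt
  · simpa using h.hasFDerivWithinAt.snd.hasDerivWithinAt

theorem hasDerivWithinAt_integral_Ici {E : Type*} [NormedAddCommGroup E] [NormedSpace ℝ E]
    [CompleteSpace E] {f : ℝ → E} {a t : ℝ} (hf : ContinuousOn f (Ici a)) (ht : a ≤ t) :
    HasDerivWithinAt (fun u => ∫ s in a..u, f s) (f t) (Ici t) t := by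
  have hsub : Ioi t ⊆ Ici a := Ioi_subset_Ici_self.trans (Ici_subset_Ici.2 ht)
  refine intervalIntegral.integral_hasDerivWithinAt_right (t := Ioi t) ?_ ?_ ((hf t ht).mono hsub)
  · exact (hf.mono (by rw [uIcc_of_le ht]; exact Icc_subset_Ici_self)).intervalIntegrable
  · exact (hf.mono hsub).stronglyMeasurableAtFilter_nhdsWithin measurableSet_Ioi t


section MomentGeneratingFunction

open ProbabilityTheory

theorem tendsto_exp_mul_sub_one_div (x : ℝ) :
    Tendsto (fun t : ℝ => (Real.exp (t * x) - 1) / t) (𝓝[<] 0) (𝓝 x) := by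
  have h : HasDerivAt (fun t : ℝ => Real.exp (t * x)) x 0 := by
    simpa using ((hasDerivAt_id (0 : ℝ)).mul_const x).exp
  simpa [slope_fun_def_field] using
    (hasDerivWithinAt_iff_tendsto_slope' (by simp)).1 (h.hasDerivWithinAt (s := Iio 0))

theorem exp_mul_sub_one_div_mem_Icc {x t : ℝ} (hx : 0 ≤ x) (ht : t < 0) :
    (Real.exp (t * x) - 1) / t ∈ Icc 0 x := by
  constructor
  · refine div_nonneg_of_nonpos ?_ ht.le
    linarith [Real.exp_le_one_iff.2 (mul_nonpos_of_nonpos_of_nonneg ht.le hx)]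
  · rw [div_le_iff_of_neg ht]
    linarith [Real.add_one_le_exp (t * x)]

variable {Ω : Type*} {mΩ : MeasurableSpace Ω} {μ : Measure Ω} [IsFiniteMeasure μ] {X : Ω → ℝ}
  {m : ℝ}

theorem integrable_exp_mul_of_nonpos (hX : AEMeasurable X μ) (hX0 : 0 ≤ᵐ[μ] X) {t : ℝ}
    (ht : t ≤ 0) : Integrable (fun ω => Real.exp (t * X ω)) μ := by
  simpa using integrable_exp_mul_of_le (X := -X) (-t) 0 (neg_nonneg.2 ht) hX.neg
    (hX0.mono fun ω hω => neg_nonpos.2 hω)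

theorem integral_exp_mul_sub_one_div (hX : AEMeasurable X μ) (hX0 : 0 ≤ᵐ[μ] X) {t : ℝ}
    (ht : t ≤ 0) : ∫ ω, (Real.exp (t * X ω) - 1) / t ∂μ = slope (mgf X μ) 0 t := by
  rw [integral_div, integral_sub (integrable_exp_mul_of_nonpos hX hX0 ht) (integrable_const _),
    slope_def_field, mgf_zero']
  simp [mgf]

theorem tendsto_integral_exp_mul_sub_one_div (hX : AEMeasurable X μ) (hX0 : 0 ≤ᵐ[μ] X)
    (hm : HasDerivWithinAt (mgf X μ) m (Iic 0) 0) :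
    Tendsto (fun t => ∫ ω, (Real.exp (t * X ω) - 1) / t ∂μ) (𝓝[<] 0) (𝓝 m) := by
  refine ((hasDerivWithinAt_iff_tendsto_slope' (by simp)).1
    (hm.mono Iio_subset_Iic_self)).congr' ?_
  filter_upwards [self_mem_nhdsWithin] with t (ht : t < 0)
  exact (integral_exp_mul_sub_one_div hX hX0 ht.le).symm

theorem integrable_of_hasDerivWithinAt_mgf (hX : AEMeasurable X μ) (hX0 : 0 ≤ᵐ[μ] X)
    (hm : HasDerivWithinAt (mgf X μ) m (Iic 0) 0) : Integrable X μ := by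
  rw [← lintegral_ofReal_ne_top_iff_integrable hX.aestronglyMeasurable hX0]
  have hlim : Tendsto (fun t => ∫⁻ ω, ENNReal.ofReal ((Real.exp (t * X ω) - 1) / t) ∂μ)
      (𝓝[<] 0) (𝓝 (ENNReal.ofReal m)) := by
    refine (ENNReal.tendsto_ofReal (tendsto_integral_exp_mul_sub_one_div hX hX0 hm)).congr' ?_
    filter_upwards [self_mem_nhdsWithin] with t (ht : t < 0)
    refine ofReal_integral_eq_lintegral_ofReal
      (((integrable_exp_mul_of_nonpos hX hX0 ht.le).sub (integrable_const _)).div_const _) ?_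
    filter_upwards [hX0] with ω hω using (exp_mul_sub_one_div_mem_Icc hω ht).1
  refine ne_top_of_le_ne_top (ENNReal.ofReal_ne_top (r := m)) ?_
  calc ∫⁻ ω, ENNReal.ofReal (X ω) ∂μ
      = ∫⁻ ω, liminf (fun t => ENNReal.ofReal ((Real.exp (t * X ω) - 1) / t)) (𝓝[<] 0) ∂μ :=
        lintegral_congr fun ω =>
          (ENNReal.tendsto_ofReal (tendsto_exp_mul_sub_one_div (X ω))).liminf_eq.symm
    _ ≤ liminf (fun t => ∫⁻ ω, ENNReal.ofReal ((Real.exp (t * X ω) - 1) / t) ∂μ) (𝓝[<] 0) :=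
        lintegral_liminf_le' fun t => by fun_prop
    _ = ENNReal.ofReal m := hlim.liminf_eq

theorem integral_eq_of_hasDerivWithinAt_mgf (hX : AEMeasurable X μ) (hX0 : 0 ≤ᵐ[μ] X)
    (hm : HasDerivWithinAt (mgf X μ) m (Iic 0) 0) : ∫ ω, X ω ∂μ = m := by
  refine tendsto_nhds_unique (f := fun t => ∫ ω, (Real.exp (t * X ω) - 1) / t ∂μ) (l := 𝓝[<] 0) ?_
    (tendsto_integral_exp_mul_sub_one_div hX hX0 hm)
  refine tendsto_integral_filter_of_dominated_convergence X
    (Eventually.of_forall fun t => by fun_prop) ?_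
    (integrable_of_hasDerivWithinAt_mgf hX hX0 hm)
    (Eventually.of_forall fun ω => tendsto_exp_mul_sub_one_div (X ω))
  filter_upwards [self_mem_nhdsWithin] with t (ht : t < 0)
  filter_upwards [hX0] with ω hω
  have hmem := exp_mul_sub_one_div_mem_Icc hω ht
  rw [Real.norm_of_nonneg hmem.1]
  exact hmem.2

end MomentGeneratingFunction

section JumpRemainder

/-- The compensated exponential `e^{-x} - 1 + x`, the integrand of the Lévy-Khintchine part of a
branching mechanism. -/
def compensatedExp (x : ℝ) : ℝ := Real.exp (-x) - 1 + x

theorem compensatedExp_nonneg (x : ℝ) : 0 ≤ compensatedExp x := by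
  unfold compensatedExp
  linarith [Real.add_one_le_exp (-x)]

@[simp]
theorem compensatedExp_zero : compensatedExp 0 = 0 := by
  simp [compensatedExp]

@[fun_prop]
theorem continuous_compensatedExp : Continuous compensatedExp := by
  unfold compensatedExp
  fun_prop

theorem hasDerivAt_compensatedExp_zero : HasDerivAt compensatedExp 0 0 := by
  unfold compensatedExp
  simpa using ((hasDerivAt_neg (0 : ℝ)).exp.sub_const 1).fun_add (hasDerivAt_id 0)

theorem compensatedExp_le_mul_one_sub_exp_neg (x : ℝ) :
    compensatedExp x ≤ x * (1 - Real.exp (-x)) := by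
  have h : (x + 1) * Real.exp (-x) ≤ Real.exp x * Real.exp (-x) := by
    gcongr
    exact Real.add_one_le_exp x
  rw [← Real.exp_add, add_neg_cancel, Real.exp_zero] at h
  unfold compensatedExp
  linarith

theorem abs_one_sub_exp_neg_le {C x : ℝ} (hC : 0 ≤ C) (hx : -C ≤ x) :
    |1 - Real.exp (-x)| ≤ Real.exp C * min 1 |x| := by
  have hC1 : 1 ≤ Real.exp C := Real.one_le_exp hC
  have hexp : Real.exp (-x) ≤ Real.exp C := Real.exp_le_exp.2 (by linarith)
  have hpos := Real.exp_pos (-x)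
  have hlow := Real.add_one_le_exp (-x)
  have hhigh : x ≤ 0 → Real.exp (-x) - 1 ≤ Real.exp C * -x := fun hx0 => by
    have h := compensatedExp_le_mul_one_sub_exp_neg x
    unfold compensatedExp at h
    nlinarith
  rw [mul_min_of_nonneg _ _ (by positivity), abs_le]
  rcases le_total 0 x with h | h
  · rw [abs_of_nonneg h]
    have : Real.exp (-x) ≤ 1 := Real.exp_le_one_iff.2 (by linarith)
    have : 0 ≤ min (Real.exp C * 1) (Real.exp C * x) := by positivity
    exact ⟨by linarith, le_min (by linarith) (by nlinarith)⟩
  · rw [abs_of_nonpos h, neg_le, neg_sub]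
    have : 0 ≤ min (Real.exp C * 1) (Real.exp C * -x) := by
      exact le_min (by positivity) (mul_nonneg (by positivity) (by linarith))
    exact ⟨le_min (by linarith) (hhigh h), by linarith⟩

theorem compensatedExp_le {C x : ℝ} (hC : 0 ≤ C) (hx : -C ≤ x) :
    compensatedExp x ≤ Real.exp C * min |x| (x ^ 2) :=
  calc compensatedExp x ≤ |x| * |1 - Real.exp (-x)| := by
        rw [← abs_mul]
        exact (compensatedExp_le_mul_one_sub_exp_neg x).trans (le_abs_self _)
    _ ≤ |x| * (Real.exp C * min 1 |x|) := by gcongr; exact abs_one_sub_exp_neg_le hC hx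
    _ = Real.exp C * min |x| (x ^ 2) := by
      rw [mul_left_comm, mul_min_of_nonneg _ _ (abs_nonneg x), mul_one, abs_mul_abs_self, sq]

theorem compensatedExp_le_of_abs_le {r s x : ℝ} (hr : 0 ≤ r) (hs : 0 ≤ s) (hx : -r ≤ x)
    (hxs : |x| ≤ r * s) : compensatedExp x ≤ r * (Real.exp (2 * r) * min s (s ^ 2)) := by
  have hmin : min |x| (x ^ 2) ≤ r * Real.exp r * min s (s ^ 2) := by
    rw [mul_min_of_nonneg _ _ (by positivity), ← sq_abs x]
    refine min_le_min (hxs.trans ?_) ((pow_le_pow_left₀ (abs_nonneg _) hxs 2).trans ?_)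
    · rw [mul_assoc]
      gcongr
      exact le_mul_of_one_le_left hs (Real.one_le_exp hr)
    · rw [mul_pow, sq r]
      gcongr
      linarith [Real.add_one_le_exp r]
  calc compensatedExp x
      ≤ Real.exp r * (r * Real.exp r * min s (s ^ 2)) :=
        (compensatedExp_le hr hx).trans (by gcongr)
    _ = r * (Real.exp (2 * r) * min s (s ^ 2)) := by rw [two_mul, Real.exp_add]; ring

theorem compensatedExp_pairing_le {v z : ℝ × ℝ} (hv : 0 ≤ v) (hz : 0 ≤ z.1 ∧ -1 ≤ z.2) :
    compensatedExp (v.1 * z.1 + v.2 * z.2) ≤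
      ‖v‖ * (Real.exp (2 * ‖v‖) * min (z.1 + |z.2|) ((z.1 + |z.2|) ^ 2)) := by
  obtain ⟨hz1, hz2⟩ := hz
  have hv1 : 0 ≤ v.1 := hv.1
  have hv2 : 0 ≤ v.2 := hv.2
  have hn1 : v.1 ≤ ‖v‖ := (Real.le_norm_self _).trans (norm_fst_le v)
  have hn2 : v.2 ≤ ‖v‖ := (Real.le_norm_self _).trans (norm_snd_le v)
  refine compensatedExp_le_of_abs_le (norm_nonneg v) (by positivity) ?_ ?_
  · nlinarith [mul_nonneg hv1 hz1]
  · refine (abs_add_le _ _).trans ?_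
    rw [abs_mul, abs_mul, abs_of_nonneg hv1, abs_of_nonneg hv2, abs_of_nonneg hz1, mul_add]
    gcongr

theorem hasFDerivAt_compensatedExp_pairing_zero (z : ℝ × ℝ) :
    HasFDerivAt (fun v : ℝ × ℝ => compensatedExp (v.1 * z.1 + v.2 * z.2))
      (0 : ℝ × ℝ →L[ℝ] ℝ) 0 := by
  have hpair : DifferentiableAt ℝ (fun v : ℝ × ℝ => v.1 * z.1 + v.2 * z.2) 0 := by fun_prop
  simpa [Function.comp_def] using HasDerivAt.comp_hasFDerivAt_of_eq 0
    hasDerivAt_compensatedExp_zero hpair.hasFDerivAt (by simp)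

/-- The condition on a jump measure under which the compensated integral `jumpRemainder` converges
on the quadrant and is `o(‖v‖)` at `0`: jumps have size `s = z₁ + |z₂|` with `s ∧ s²` integrable,
and the second type decreases by at most one at each jump. -/
structure IsAdmissibleJumpMeasure (μ : Measure (ℝ × ℝ)) : Prop where
  ae_mem : ∀ᵐ z ∂μ, 0 ≤ z.1 ∧ -1 ≤ z.2
  integrable_min : Integrable (fun z => min (z.1 + |z.2|) ((z.1 + |z.2|) ^ 2)) μ

/-- The nonlinear part `∫ (e^{-⟨v,z⟩} - 1 + ⟨v,z⟩) μ(dz)` of a branching mechanism with jump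
measure `μ`. -/
def jumpRemainder (μ : Measure (ℝ × ℝ)) (v : ℝ × ℝ) : ℝ :=
  ∫ z, compensatedExp (v.1 * z.1 + v.2 * z.2) ∂μ

namespace IsAdmissibleJumpMeasure

variable {μ : Measure (ℝ × ℝ)} {v : ℝ × ℝ}

theorem integrable_compensatedExp (hμ : IsAdmissibleJumpMeasure μ) (hv : 0 ≤ v) :
    Integrable (fun z => compensatedExp (v.1 * z.1 + v.2 * z.2)) μ := by
  refine ((hμ.integrable_min.const_mul (Real.exp (2 * ‖v‖))).const_mul ‖v‖).mono'
    (by fun_prop : Continuous _).aestronglyMeasurable ?_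
  filter_upwards [hμ.ae_mem] with z hz
  rw [Real.norm_of_nonneg (compensatedExp_nonneg _)]
  exact compensatedExp_pairing_le hv hz

theorem continuousOn_jumpRemainder (hμ : IsAdmissibleJumpMeasure μ) :
    ContinuousOn (jumpRemainder μ) (Ici 0) := by
  intro v _
  have hbd : ∀ᶠ w in 𝓝[Ici 0] v, ‖w‖ < ‖v‖ + 1 :=
    continuous_norm.continuousWithinAt.eventually_lt_const (lt_add_one ‖v‖)
  refine continuousWithinAt_of_dominated (bound := fun z => (‖v‖ + 1) *
    (Real.exp (2 * (‖v‖ + 1)) * min (z.1 + |z.2|) ((z.1 + |z.2|) ^ 2)))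
    (.of_forall fun w => (by fun_prop : Continuous _).aestronglyMeasurable) ?_
    ((hμ.integrable_min.const_mul _).const_mul _)
    (.of_forall fun z => (by fun_prop : Continuous _).continuousWithinAt)
  filter_upwards [hbd, self_mem_nhdsWithin] with w hw hw0
  filter_upwards [hμ.ae_mem] with z hz
  rw [Real.norm_of_nonneg (compensatedExp_nonneg _)]
  have hz1 := hz.1
  refine (compensatedExp_pairing_le hw0 hz).trans ?_
  gcongr

theorem hasFDerivWithinAt_jumpRemainder_zero (hμ : IsAdmissibleJumpMeasure μ) :
    HasFDerivWithinAt (jumpRemainder μ) (0 : ℝ × ℝ →L[ℝ] ℝ) (Ici 0) 0 := by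
  have hlim : Tendsto (fun v : ℝ × ℝ => ∫ z, ‖v‖⁻¹ * compensatedExp (v.1 * z.1 + v.2 * z.2) ∂μ)
      (𝓝[Ici 0] 0) (𝓝 (∫ _, 0 ∂μ)) := by
    refine tendsto_integral_filter_of_dominated_convergence
      (fun z => Real.exp (2 * 1) * min (z.1 + |z.2|) ((z.1 + |z.2|) ^ 2))
      (.of_forall fun v => (by fun_prop : Continuous _).aestronglyMeasurable) ?_
      (hμ.integrable_min.const_mul _) (.of_forall fun z => ?_)
    · have hbd : ∀ᶠ v : ℝ × ℝ in 𝓝[Ici 0] 0, ‖v‖ < 1 :=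
        continuous_norm.continuousWithinAt.eventually_lt_const (by simp)
      filter_upwards [hbd, self_mem_nhdsWithin] with v hv hv0
      filter_upwards [hμ.ae_mem] with z hz
      have hz1 := hz.1
      rw [Real.norm_of_nonneg (mul_nonneg (by positivity) (compensatedExp_nonneg _))]
      refine inv_mul_le_of_le_mul₀ (norm_nonneg v) (by positivity)
        ((compensatedExp_pairing_le hv0 hz).trans ?_)
      gcongr
    · simpa [abs_of_nonneg, compensatedExp_nonneg] using
        hasFDerivWithinAt_iff_tendsto.1
          (hasFDerivAt_compensatedExp_pairing_zero z).hasFDerivWithinAt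
  rw [hasFDerivWithinAt_iff_tendsto]
  simpa [jumpRemainder, integral_const_mul, abs_of_nonneg, integral_nonneg,
    compensatedExp_nonneg, Pi.le_def] using hlim

end IsAdmissibleJumpMeasure

end JumpRemainder

theorem nonneg_of_mem_Mset {z : ℝ × ℝ} (hz : z ∈ Mset) : 0 ≤ z := by
  obtain ⟨hz1, n, hn⟩ := hz
  exact ⟨hz1, hn ▸ n.cast_nonneg⟩

namespace BranchingMechanism

variable (B : BranchingMechanism) {v : ℝ × ℝ}

theorem ae_mem_Mset : ∀ᵐ z ∂B.n1, z ∈ Mset := B.n1_supp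

theorem ae_mem_Mm1set : ∀ᵐ z ∂B.n2, z ∈ Mm1set := B.n2_supp

theorem ae_nonneg_n1 : ∀ᵐ z ∂B.n1, 0 ≤ z := by
  filter_upwards [B.ae_mem_Mset] with z hz using nonneg_of_mem_Mset hz

theorem integrable_min_add_snd_n1 :
    Integrable (fun z => min z.1 (z.1 ^ 2) + z.2) B.n1 := by
  refine (lintegral_ofReal_ne_top_iff_integrable
    (by fun_prop : Continuous _).aestronglyMeasurable ?_).1 B.n1_moment
  filter_upwards [B.ae_nonneg_n1] with z hz
  exact add_nonneg (le_min hz.1 (sq_nonneg _)) hz.2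

theorem integrable_snd_n1 : Integrable (fun z => z.2) B.n1 := by
  refine B.integrable_min_add_snd_n1.mono' measurable_snd.aestronglyMeasurable ?_
  filter_upwards [B.ae_nonneg_n1] with z hz
  rw [Real.norm_of_nonneg hz.2]
  exact le_add_of_nonneg_left (le_min hz.1 (sq_nonneg _))

theorem integrable_fst_add_abs_snd_n2 : Integrable (fun z => z.1 + |z.2|) B.n2 := by
  refine (lintegral_ofReal_ne_top_iff_integrable
    (by fun_prop : Continuous _).aestronglyMeasurable ?_).1 B.n2_moment
  filter_upwards [B.ae_mem_Mm1set] with z hz using add_nonneg hz.1 (abs_nonneg _)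

theorem integrable_fst_n2 : Integrable (fun z => z.1) B.n2 := by
  refine B.integrable_fst_add_abs_snd_n2.mono' measurable_fst.aestronglyMeasurable ?_
  filter_upwards [B.ae_mem_Mm1set] with z hz
  rw [Real.norm_of_nonneg hz.1]
  exact le_add_of_nonneg_right (abs_nonneg _)

theorem integrable_snd_n2 : Integrable (fun z => z.2) B.n2 := by
  refine B.integrable_fst_add_abs_snd_n2.mono' measurable_snd.aestronglyMeasurable ?_
  filter_upwards [B.ae_mem_Mm1set] with z hz
  exact le_add_of_nonneg_left hz.1

theorem isAdmissibleJumpMeasure_n1 : IsAdmissibleJumpMeasure B.n1 where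
  ae_mem := by
    filter_upwards [B.ae_nonneg_n1] with z hz using ⟨hz.1, neg_one_lt_zero.le.trans hz.2⟩
  integrable_min := by
    refine (B.integrable_min_add_snd_n1.const_mul 2).mono'
      (by fun_prop : Continuous _).aestronglyMeasurable ?_
    filter_upwards [B.ae_mem_Mset] with z hz
    obtain ⟨hz1, n, hn⟩ := hz
    rw [hn, abs_of_nonneg n.cast_nonneg, Real.norm_of_nonneg (by positivity)]
    rcases Nat.eq_zero_or_pos n with rfl | hn0
    · have : 0 ≤ min z.1 (z.1 ^ 2) := by positivity
      simp only [Nat.cast_zero, add_zero]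
      linarith
    · have hn1 : (1 : ℝ) ≤ n := by exact_mod_cast hn0
      refine (min_le_left _ _).trans ?_
      rcases min_cases z.1 (z.1 ^ 2) with ⟨h, _⟩ | ⟨h, _⟩ <;> rw [h] <;>
        nlinarith [sq_nonneg (z.1 - 1)]

theorem isAdmissibleJumpMeasure_n2 : IsAdmissibleJumpMeasure B.n2 where
  ae_mem := by
    filter_upwards [B.ae_mem_Mm1set] with z hz
    obtain ⟨hz1, n, hn1, hn⟩ := hz
    exact ⟨hz1, by rw [hn]; exact_mod_cast hn1⟩
  integrable_min := by
    refine B.integrable_fst_add_abs_snd_n2.mono'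
      (by fun_prop : Continuous _).aestronglyMeasurable ?_
    filter_upwards [B.ae_mem_Mm1set] with z hz
    have hz1 : 0 ≤ z.1 := hz.1
    rw [Real.norm_of_nonneg (by positivity)]
    exact min_le_left _ _

/-- The matrix of the linear moment system, acting on `ℝ²`: the linearization at `0` of the
branching mechanism. -/
def momentGenerator : ℝ × ℝ →L[ℝ] ℝ × ℝ :=
  (-B.a11 • ContinuousLinearMap.fst ℝ ℝ ℝ +
    (∫ z, z.2 ∂B.n1) • ContinuousLinearMap.snd ℝ ℝ ℝ).prod
  ((B.a21 + ∫ z, z.1 ∂B.n2) • ContinuousLinearMap.fst ℝ ℝ ℝ +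
    (∫ z, z.2 ∂B.n2) • ContinuousLinearMap.snd ℝ ℝ ℝ)

theorem momentGenerator_apply_fst (v : ℝ × ℝ) :
    (B.momentGenerator v).1 = -B.a11 * v.1 + v.2 * ∫ z, z.2 ∂B.n1 := by
  simp [momentGenerator, mul_comm]

theorem momentGenerator_apply_snd (v : ℝ × ℝ) :
    (B.momentGenerator v).2 = B.a21 * v.1 + ∫ z, (z.1 * v.1 + z.2 * v.2) ∂B.n2 := by
  rw [integral_add (B.integrable_fst_n2.mul_const _) (B.integrable_snd_n2.mul_const _),
    integral_mul_const, integral_mul_const]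
  simp [momentGenerator, add_mul, add_assoc]

/-- The branching mechanism as a vector field `(Φ₁, Φ₂)` on the quadrant, so that the cumulant
equations become one autonomous differential equation. -/
def vectorField (v : ℝ × ℝ) : ℝ × ℝ := (mPhi1 B v, mPhi2 B v)

/-- The nonlinear part of the branching mechanism: `vectorField = momentGenerator - remainder`. -/
def remainder (v : ℝ × ℝ) : ℝ × ℝ :=
  (B.alpha * v.1 ^ 2 + jumpRemainder B.n1 v, jumpRemainder B.n2 v)

theorem mPhi1_eq_momentGenerator_sub_remainder (hv : 0 ≤ v) :
    mPhi1 B v = (B.momentGenerator v - B.remainder v).1 := by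
  have hint : ∫ z, (Real.exp (-(v.1 * z.1 + v.2 * z.2)) - 1 + v.1 * z.1) ∂B.n1
      = jumpRemainder B.n1 v - v.2 * ∫ z, z.2 ∂B.n1 := by
    rw [jumpRemainder, ← integral_const_mul,
      ← integral_sub (B.isAdmissibleJumpMeasure_n1.integrable_compensatedExp hv)
        (B.integrable_snd_n1.const_mul _)]
    refine integral_congr_ae (.of_forall fun z => ?_)
    simp only [compensatedExp]
    ring
  rw [mPhi1, hint, Prod.fst_sub, momentGenerator_apply_fst, remainder]
  ring

theorem mPhi2_eq_momentGenerator_sub_remainder (hv : 0 ≤ v) :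
    mPhi2 B v = (B.momentGenerator v - B.remainder v).2 := by
  have hint : ∫ z, (1 - Real.exp (-(v.1 * z.1 + v.2 * z.2))) ∂B.n2
      = (∫ z, (z.1 * v.1 + z.2 * v.2) ∂B.n2) - jumpRemainder B.n2 v := by
    rw [jumpRemainder, ← integral_sub
      ((B.integrable_fst_n2.mul_const _).fun_add (B.integrable_snd_n2.mul_const _))
      (B.isAdmissibleJumpMeasure_n2.integrable_compensatedExp hv)]
    refine integral_congr_ae (.of_forall fun z => ?_)
    simp only [compensatedExp]
    ring
  rw [mPhi2, hint, Prod.snd_sub, momentGenerator_apply_snd, remainder]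
  ring

theorem eqOn_vectorField :
    EqOn B.vectorField (fun v => B.momentGenerator v - B.remainder v) (Ici 0) :=
  fun _ hv => Prod.ext (B.mPhi1_eq_momentGenerator_sub_remainder hv)
    (B.mPhi2_eq_momentGenerator_sub_remainder hv)

theorem continuousOn_remainder : ContinuousOn B.remainder (Ici 0) :=
  .prodMk (.add (by fun_prop) B.isAdmissibleJumpMeasure_n1.continuousOn_jumpRemainder)
    B.isAdmissibleJumpMeasure_n2.continuousOn_jumpRemainder

theorem hasFDerivWithinAt_remainder_zero :
    HasFDerivWithinAt B.remainder (0 : ℝ × ℝ →L[ℝ] ℝ × ℝ) (Ici 0) 0 := by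
  have hquad : HasFDerivWithinAt (fun v : ℝ × ℝ => B.alpha * v.1 ^ 2) (0 : ℝ × ℝ →L[ℝ] ℝ)
      (Ici 0) 0 := by
    simpa using ((hasFDerivAt_fst (𝕜 := ℝ) (p := (0 : ℝ × ℝ))).pow 2).const_mul B.alpha
      |>.hasFDerivWithinAt (s := Ici 0)
  have hfst := hquad.fun_add B.isAdmissibleJumpMeasure_n1.hasFDerivWithinAt_jumpRemainder_zero
  exact (hfst.prodMk B.isAdmissibleJumpMeasure_n2.hasFDerivWithinAt_jumpRemainder_zero).congr_fderiv
    (by ext <;> simp)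

theorem continuousOn_vectorField : ContinuousOn B.vectorField (Ici 0) :=
  (B.momentGenerator.continuous.continuousOn.sub B.continuousOn_remainder).congr B.eqOn_vectorField

theorem hasFDerivWithinAt_vectorField_zero :
    HasFDerivWithinAt B.vectorField B.momentGenerator (Ici 0) 0 := by
  simpa using (B.momentGenerator.hasFDerivWithinAt.sub B.hasFDerivWithinAt_remainder_zero).congr
    B.eqOn_vectorField (B.eqOn_vectorField self_mem_Ici)

theorem vectorField_zero : B.vectorField 0 = 0 := by
  simp [vectorField, mPhi1, mPhi2]

end BranchingMechanism

theorem SolvesCumulant.isForwardSolutionOn {B : BranchingMechanism} {V : ℝ → ℝ × ℝ → ℝ × ℝ}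
    (hV : ∀ l, 0 ≤ l → SolvesCumulant B l fun t => V t l) :
    IsForwardSolutionOn B.vectorField (Ici 0) V where
  initial l hl := by
    obtain ⟨h1, h2⟩ := (hV l hl).2.2 0 le_rfl
    exact Prod.ext (by simpa using h1) (by simpa using h2)
  mem l hl := (hV l hl).2.1
  continuousOn l hl := (hV l hl).1
  hasDerivWithinAt l hl t ht := by
    obtain ⟨hcont, hmem, heq⟩ := hV l hl
    have hfield : ContinuousOn (fun s => B.vectorField (V s l)) (Ici 0) :=
      B.continuousOn_vectorField.comp hcont hmem
    have h1 := (hasDerivWithinAt_integral_Ici hfield.fst ht).const_add l.1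
    have h2 := (hasDerivWithinAt_integral_Ici hfield.snd ht).const_add l.2
    refine (h1.prodMk h2).congr (fun s hs => ?_) ?_
    · exact Prod.ext (heq s (ht.trans hs)).1 (heq s (ht.trans hs)).2
    · exact Prod.ext (heq t ht).1 (heq t ht).2

theorem solvesMoment_iff {B : BranchingMechanism} {l : ℝ × ℝ} {π : ℝ → ℝ × ℝ} :
    SolvesMoment B l π ↔ π 0 = l ∧ (∀ t, 0 ≤ t → 0 ≤ π t) ∧
      ∀ t, 0 ≤ t → HasDerivWithinAt π (B.momentGenerator (π t)) (Ici 0) t := by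
  simp only [SolvesMoment, hasDerivWithinAt_prod_iff, B.momentGenerator_apply_fst,
    B.momentGenerator_apply_snd, Prod.le_def, Prod.fst_zero, Prod.snd_zero]

namespace IsMSBTransition

variable {V : ℝ → ℝ × ℝ → ℝ × ℝ} {P : ℝ → ℝ × ℝ → Measure (ℝ × ℝ)} {l x : ℝ × ℝ} {t : ℝ}

theorem ae_pairing_nonneg (hP : IsMSBTransition V P) (ht : 0 ≤ t) (hx : x ∈ Mset) (hl : 0 ≤ l) :
    ∀ᵐ y ∂P t x, 0 ≤ l.1 * y.1 + l.2 * y.2 := by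
  have hmem : ∀ᵐ y ∂P t x, y ∈ Mset := (hP t ht x hx).2.1
  filter_upwards [hmem] with y hy
  have hy0 := nonneg_of_mem_Mset hy
  exact add_nonneg (mul_nonneg hl.1 hy0.1) (mul_nonneg hl.2 hy0.2)

theorem mgf_pairing (hP : IsMSBTransition V P) (ht : 0 ≤ t) (hx : x ∈ Mset) (hl : 0 ≤ l) {θ : ℝ}
    (hθ : θ ≤ 0) : ProbabilityTheory.mgf (fun y => l.1 * y.1 + l.2 * y.2) (P t x) θ =
      Real.exp (-(x.1 * (V t (-θ • l)).1 + x.2 * (V t (-θ • l)).2)) := by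
  have hθl : 0 ≤ -θ • l := smul_nonneg (neg_nonneg.2 hθ) hl
  rw [← (hP t ht x hx).2.2 (-θ • l) hθl.1 hθl.2, ProbabilityTheory.mgf]
  refine integral_congr_ae (.of_forall fun y => ?_)
  simp only [Prod.smul_fst, Prod.smul_snd, smul_eq_mul]
  ring_nf

theorem hasDerivWithinAt_mgf_pairing (hP : IsMSBTransition V P) (ht : 0 ≤ t) (hx : x ∈ Mset)
    (hl : 0 ≤ l) {L : ℝ × ℝ →L[ℝ] ℝ × ℝ}
    (hL : HasFDerivWithinAt (V t) L (Ici 0) 0) :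
    HasDerivWithinAt (ProbabilityTheory.mgf (fun y => l.1 * y.1 + l.2 * y.2) (P t x))
      (x.1 * (L l).1 + x.2 * (L l).2) (Iic 0) 0 := by
  have hray : HasDerivWithinAt (fun θ : ℝ => -θ • l) (-l) (Iic 0) 0 := by
    simpa using ((hasDerivAt_neg (0 : ℝ)).smul_const l).hasDerivWithinAt (s := Iic 0)
  have hVray : HasDerivWithinAt (fun θ : ℝ => V t (-θ • l)) (-L l) (Iic 0) 0 := by
    simpa [Function.comp_def] using hL.comp_hasDerivWithinAt_of_eq (0 : ℝ) hray
      (fun θ hθ => smul_nonneg (neg_nonneg.2 hθ) hl) (by simp)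
  obtain ⟨h1, h2⟩ := hasDerivWithinAt_prod_iff.1 hVray
  have hexp := ((h1.const_mul x.1).fun_add (h2.const_mul x.2)).fun_neg.exp
  have hone : Real.exp (-(x.1 * (V t (-(0 : ℝ) • l)).1 + x.2 * (V t (-(0 : ℝ) • l)).2)) = 1 := by
    have := (hP t ht x hx).1
    rw [← hP.mgf_pairing ht hx hl le_rfl, ProbabilityTheory.mgf_zero]
  refine (hexp.congr (fun θ hθ => hP.mgf_pairing ht hx hl hθ)
    (hP.mgf_pairing ht hx hl le_rfl)).congr_deriv ?_
  rw [hone, Prod.fst_neg, Prod.snd_neg]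
  ring

theorem integral_pairing (hP : IsMSBTransition V P) (ht : 0 ≤ t) (hx : x ∈ Mset)
    (hl : 0 ≤ l) {L : ℝ × ℝ →L[ℝ] ℝ × ℝ}
    (hL : HasFDerivWithinAt (V t) L (Ici 0) 0) :
    ∫ y, (l.1 * y.1 + l.2 * y.2) ∂P t x = x.1 * (L l).1 + x.2 * (L l).2 :=
  have := (hP t ht x hx).1
  integral_eq_of_hasDerivWithinAt_mgf (by fun_prop) (hP.ae_pairing_nonneg ht hx hl)
    (hP.hasDerivWithinAt_mgf_pairing ht hx hl hL)

theorem fderiv_apply_nonneg (hP : IsMSBTransition V P) (ht : 0 ≤ t)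
    (hl : 0 ≤ l) {L : ℝ × ℝ →L[ℝ] ℝ × ℝ} (hL : HasFDerivWithinAt (V t) L (Ici 0) 0) : 0 ≤ L l := by
  have hpos : ∀ x ∈ Mset, 0 ≤ x.1 * (L l).1 + x.2 * (L l).2 := fun x hx => by
    rw [← hP.integral_pairing ht hx hl hL]
    exact integral_nonneg_of_ae (hP.ae_pairing_nonneg ht hx hl)
  exact ⟨by simpa using hpos (1, 0) ⟨zero_le_one, 0, by simp⟩,
    by simpa using hpos (0, 1) ⟨le_rfl, 1, by simp⟩⟩

end IsMSBTransition

/-- The first moments of the MSB-process are given by the unique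
solution of the moment linear system:
`∫ (λ₁y₁ + λ₂y₂) P_t(x,dy) = x₁π₁(t,λ) + x₂π₂(t,λ)`. -/
theorem first_moment_formula (B : BranchingMechanism)
    (V : ℝ → (ℝ × ℝ) → ℝ × ℝ)
    (hV : ∀ l : ℝ × ℝ, 0 ≤ l.1 → 0 ≤ l.2 → SolvesCumulant B l (fun t => V t l))
    (P : ℝ → (ℝ × ℝ) → Measure (ℝ × ℝ))
    (hP : IsMSBTransition V P) :
    ∀ l : ℝ × ℝ, 0 ≤ l.1 → 0 ≤ l.2 →
      ∃ π : ℝ → ℝ × ℝ, SolvesMoment B l π ∧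
        (∀ π' : ℝ → ℝ × ℝ, SolvesMoment B l π' → ∀ t : ℝ, 0 ≤ t → π' t = π t) ∧
        (∀ t : ℝ, 0 ≤ t → ∀ x ∈ Mset,
          ∫ y, (l.1 * y.1 + l.2 * y.2) ∂(P t x)
            = x.1 * (π t).1 + x.2 * (π t).2) := by
  intro l hl1 hl2
  have hl : 0 ≤ l := ⟨hl1, hl2⟩
  have hflow : IsForwardSolutionOn B.vectorField (Ici 0) V :=
    SolvesCumulant.isForwardSolutionOn fun l hl => hV l hl.1 hl.2
  have hderiv {t : ℝ} (ht : 0 ≤ t) :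
      HasFDerivWithinAt (V t) (NormedSpace.exp (t • B.momentGenerator)) (Ici 0) 0 :=
    hflow.hasFDerivWithinAt_zero self_mem_Ici B.hasFDerivWithinAt_vectorField_zero
      B.vectorField_zero ht
  refine ⟨fun t => NormedSpace.exp (t • B.momentGenerator) l, ?_, fun π hπ t ht => ?_,
    fun t ht x hx => hP.integral_pairing ht hx hl (hderiv ht)⟩
  · exact solvesMoment_iff.2 ⟨by simp, fun t ht => hP.fderiv_apply_nonneg ht hl (hderiv ht),
      fun t _ => (hasDerivAt_exp_smul_apply _ l t).hasDerivWithinAt⟩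
  · obtain ⟨hπ0, _, hπ'⟩ := solvesMoment_iff.1 hπ
    rw [eq_exp_smul_apply_of_hasDerivWithinAt _ hπ' ht, hπ0]
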